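/- arXiv:2604.04729 — 4 statements merged into one kernel-verified Lean document; each statement's English description precedes it below -/
import Mathlib

section
/- Let D = (V, E; c; s, t) be a flow network in which every arc belongs to at least one s-t path. The flow game Γ_D is convex if and only if the following three conditions hold: (i) the directed graph (V, E) is acyclic; (ii) each bottleneck arc b ∈ B belongs to a unique s-t path, i.e., |𝒫_b| = 1; and (iii) each non-bottleneck arc e ∉ B satisfies c(e) ≥ Σ_{P ∈ 𝒫_e} c(P). -/
open scoped Classical
open Finset

noncomputable section

/-- The arcs (consecutive vertex pairs) of a vertex list. -/
def arcsOf {V : Type*} [DecidableEq V] (vs : List V) : Finset (V × V) :=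
  (vs.zip vs.tail).toFinset

/-- `vs` is the vertex list of a directed path from `a` to `b` using arcs of `E`,
with pairwise distinct vertices. -/
def IsPathList {V : Type*} (E : Finset (V × V)) (a b : V) (vs : List V) : Prop :=
  vs.Nodup ∧ vs.head? = some a ∧ vs.getLast? = some b ∧
    vs.Chain' (fun x y => (x, y) ∈ E)

/-- `P` is (the arc set of) an `s`-`t` path in the network with arc set `E`. -/
def IsSTPath {V : Type*} [DecidableEq V] (E : Finset (V × V)) (s t : V)
    (P : Finset (V × V)) : Prop :=
  ∃ vs : List V, IsPathList E s t vs ∧ P = arcsOf vs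

/-- The capacity of a path (arc set): the minimum capacity of its arcs. -/
def pathCap {V : Type*} (c : V × V → ℝ) (P : Finset (V × V)) : ℝ :=
  sInf (c '' (P : Set (V × V)))

/-- `e` is a bottleneck arc of some `s`-`t` path, i.e. `e ∈ B`. -/
def IsBottleneck {V : Type*} [DecidableEq V] (E : Finset (V × V)) (c : V × V → ℝ)
    (s t : V) (e : V × V) : Prop :=
  ∃ P : Finset (V × V), IsSTPath E s t P ∧ e ∈ P ∧ c e = pathCap c P

/-- The finite set `𝒫` of all `s`-`t` paths (as arc sets). -/
def stPaths {V : Type*} [DecidableEq V] (E : Finset (V × V)) (s t : V) :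
    Finset (Finset (V × V)) :=
  E.powerset.filter (fun P => IsSTPath E s t P)

/-- The value of a flow `f`: net flow out of the source `s`. -/
def flowValue {V : Type*} [DecidableEq V] (E : Finset (V × V)) (s : V)
    (f : V × V → ℝ) : ℝ :=
  ∑ e ∈ E.filter (fun e => e.1 = s), f e - ∑ e ∈ E.filter (fun e => e.2 = s), f e

/-- `f` is a feasible flow on the coalition `S`. -/
def IsFeasibleFlow {V : Type*} [DecidableEq V] (E : Finset (V × V)) (c : V × V → ℝ)
    (s t : V) (S : Finset (V × V)) (f : V × V → ℝ) : Prop :=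
  (∀ e ∈ E, 0 ≤ f e ∧ f e ≤ c e) ∧
  (∀ e, e ∉ S → f e = 0) ∧
  (∀ v, v ≠ s → v ≠ t →
    ∑ e ∈ E.filter (fun e => e.2 = v), f e = ∑ e ∈ E.filter (fun e => e.1 = v), f e)

/-- `γ` is the characteristic function of the flow game on `D = (V,E;c;s,t)`:
for each coalition `S ⊆ E`, `γ S` is the maximum value of a feasible flow on `S`. -/
def IsFlowGame {V : Type*} [DecidableEq V] (E : Finset (V × V)) (c : V × V → ℝ)
    (s t : V) (γ : Finset (V × V) → ℝ) : Prop :=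
  ∀ S : Finset (V × V), S ⊆ E →
    IsGreatest {x : ℝ | ∃ f, IsFeasibleFlow E c s t S f ∧ flowValue E s f = x} (γ S)

/-- The cooperative game `γ` with player set `E` is convex (supermodular). -/
def GameConvex {V : Type*} [DecidableEq V] (E : Finset (V × V))
    (γ : Finset (V × V) → ℝ) : Prop :=
  ∀ e ∈ E, ∀ S T : Finset (V × V), S ⊆ T → T ⊆ E.erase e →
    γ (insert e S) - γ S ≤ γ (insert e T) - γ T

/-- The directed graph with arc set `E` contains a directed cycle. -/
def HasDirectedCycle {V : Type*} (E : Finset (V × V)) : Prop :=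
  ∃ (v : V) (vs : List V), (v :: vs).Nodup ∧
    (v :: vs).Chain' (fun x y => (x, y) ∈ E) ∧
    ((v :: vs).getLast (List.cons_ne_nil v vs), v) ∈ E


section Helpers
set_option linter.unusedSectionVars false
set_option linter.deprecated false
variable {V : Type*} [DecidableEq V]

lemma arcs_nil : arcsOf ([] : List V) = ∅ := by simp [arcsOf]
lemma arcs_single (a : V) : arcsOf [a] = ∅ := by simp [arcsOf]
lemma arcs_cons (a b : V) (l : List V) :
    arcsOf (a :: b :: l) = insert (a, b) (arcsOf (b :: l)) := by simp [arcsOf]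

lemma chain_iff (S : Finset (V × V)) (l : List V) :
    l.Chain' (fun x y => (x, y) ∈ S) ↔ arcsOf l ⊆ S := by
  induction l with
  | nil => simp [arcs_nil, List.Chain']
  | cons a l ih =>
    cases l with
    | nil => simp [arcs_single, List.Chain']
    | cons b l =>
      rw [arcs_cons, Finset.insert_subset_iff, ← ih]
      simp [List.Chain']

lemma arcs_append (l1 : List V) (a : V) (l2 : List V) :
    arcsOf (l1 ++ a :: l2) = arcsOf (l1 ++ [a]) ∪ arcsOf (a :: l2) := by
  induction l1 with
  | nil => simp [arcs_single]
  | cons b l ih =>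
    cases l with
    | nil => simp [arcs_cons, arcs_single]
    | cons d l =>
      simp only [List.cons_append] at ih ⊢
      rw [arcs_cons, ih, arcs_cons]
      simp

lemma arcs_fst {l : List V} {x y : V} (h : (x, y) ∈ arcsOf l) : x ∈ l := by
  simp only [arcsOf, List.mem_toFinset] at h
  exact (List.of_mem_zip h).1

lemma arcs_snd {l : List V} {x y : V} (h : (x, y) ∈ arcsOf l) : y ∈ l := by
  simp only [arcsOf, List.mem_toFinset] at h
  exact List.mem_of_mem_tail (List.of_mem_zip h).2

lemma mem_arcs {l : List V} {x y : V} :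
    (x, y) ∈ arcsOf l ↔ ∃ l1 l2, l = l1 ++ x :: y :: l2 := by
  constructor
  · intro h
    induction l with
    | nil => simp [arcs_nil] at h
    | cons a l ih =>
      cases l with
      | nil => simp [arcs_single] at h
      | cons b l =>
        rw [arcs_cons, Finset.mem_insert] at h
        rcases h with h | h
        · simp only [Prod.mk.injEq] at h
          exact ⟨[], l, by simp [h.1, h.2]⟩
        · obtain ⟨l1, l2, e⟩ := ih h
          exact ⟨a :: l1, l2, by simp [e]⟩
  · rintro ⟨l1, l2, rfl⟩
    rw [arcs_append, arcs_cons]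
    simp

/-- split arcs at an arc -/
lemma mem_arcs_split {l1 l2 : List V} {x y u w : V}
    (h : (u, w) ∈ arcsOf (l1 ++ x :: y :: l2)) :
    (u, w) ∈ arcsOf (l1 ++ [x]) ∨ (u, w) = (x, y) ∨ (u, w) ∈ arcsOf (y :: l2) := by
  rw [arcs_append, arcs_cons] at h
  simp only [Finset.mem_union, Finset.mem_insert] at h
  exact h

lemma arcs_eq_of_subset {l1 l2 : List V} {a b : V} (h1 : l1.Nodup) (h2 : l2.Nodup)
    (ha1 : l1.head? = some a) (ha2 : l2.head? = some a)
    (hb1 : l1.getLast? = some b) (hb2 : l2.getLast? = some b)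
    (hs : arcsOf l1 ⊆ arcsOf l2) : l1 = l2 := by
  induction l1 generalizing l2 a with
  | nil => simp at ha1
  | cons x l1 ih =>
    simp only [List.head?_cons, Option.some.injEq] at ha1
    subst ha1
    cases l2 with
    | nil => simp at ha2
    | cons x' l2 =>
      simp only [List.head?_cons, Option.some.injEq] at ha2
      subst ha2
      rw [List.nodup_cons] at h1 h2
      cases l1 with
      | nil =>
        simp only [List.getLast?_singleton, Option.some.injEq] at hb1
        subst hb1
        cases l2 with
        | nil => rfl
        | cons y l2 =>
          rw [List.getLast?_cons_cons] at hb2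
          exact absurd (List.mem_of_getLast? hb2) h2.1
      | cons y l1 =>
        have hxy : (x', y) ∈ arcsOf (x' :: l2) := hs (by simp [arcs_cons])
        cases l2 with
        | nil => simp [arcs_single] at hxy
        | cons z l2 =>
          rw [arcs_cons, Finset.mem_insert] at hxy
          rcases hxy with hxy | hxy
          · simp only [Prod.mk.injEq, true_and] at hxy
            subst hxy
            congr 1
            apply ih h1.2 h2.2 (a := y) (by simp) (by simp)
            · simpa using hb1
            · simpa using hb2
            · rintro ⟨u, w⟩ huw
              have := hs (show (u, w) ∈ arcsOf (x' :: y :: l1) by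
                rw [arcs_cons]; exact Finset.mem_insert_of_mem huw)
              rw [arcs_cons, Finset.mem_insert] at this
              rcases this with h | h
              · simp only [Prod.mk.injEq] at h
                exact absurd (h.1 ▸ arcs_fst huw) h1.1
              · exact h
          · exact absurd (arcs_fst hxy) h2.1

lemma path_mono {S T : Finset (V × V)} {a b : V} {l : List V} (h : IsPathList S a b l)
    (hs : arcsOf l ⊆ T) : IsPathList T a b l :=
  ⟨h.1, h.2.1, h.2.2.1, (chain_iff _ _).2 hs⟩

lemma path_arcs {S : Finset (V × V)} {a b : V} {l : List V} (h : IsPathList S a b l) :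
    arcsOf l ⊆ S := (chain_iff _ _).1 h.2.2.2

lemma reach_path (S : Finset (V × V)) {a b : V}
    (h : Relation.ReflTransGen (fun x y => (x, y) ∈ S) a b) :
    ∃ l, IsPathList S a b l := by
  induction h with
  | refl => exact ⟨[a], by simp [IsPathList, List.Chain']⟩
  | tail hab hbc ih =>
    rename_i b d
    obtain ⟨l, hl⟩ := ih
    by_cases hd : d ∈ l
    · obtain ⟨l1, l2, rfl⟩ := List.append_of_mem hd
      refine ⟨l1 ++ [d], ?_, ?_, by simp, ?_⟩
      · have := hl.1
        rw [List.append_cons] at this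
        exact (List.nodup_append.1 this).1
      · have := hl.2.1
        cases l1 <;> simpa using this
      · rw [chain_iff]
        have := path_arcs hl
        rw [arcs_append] at this
        exact Finset.union_subset_left this
    · have hb := hl.2.2.1
      obtain ⟨l', rfl⟩ : ∃ l', l = l' ++ [b] := by
        rw [List.getLast?_eq_some_iff] at hb
        exact hb
      refine ⟨l' ++ [b] ++ [d], ?_, ?_, by simp, ?_⟩
      · rw [List.nodup_append]
        refine ⟨hl.1, by simp, ?_⟩
        intro x hx y hy
        simp only [List.mem_singleton] at hy
        rintro rfl
        exact hd (hy ▸ hx)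
      · have := hl.2.1
        cases l' <;> simpa using this
      · rw [chain_iff, List.append_assoc]
        simp only [List.singleton_append]
        rw [arcs_append, arcs_cons, arcs_single]
        apply Finset.union_subset (path_arcs hl)
        simpa using hbc

lemma list_reach (S : Finset (V × V)) {b : V} {l : List V} {a : V}
    (hb : (a :: l).getLast? = some b) (hs : arcsOf (a :: l) ⊆ S) :
    Relation.ReflTransGen (fun x y => (x, y) ∈ S) a b := by
  induction l generalizing a with
  | nil => simp at hb; subst hb; exact .refl
  | cons d l ih =>
    rw [arcs_cons, Finset.insert_subset_iff] at hs
    exact .head hs.1 (ih (by simpa using hb) hs.2)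

lemma telescope (g : V → ℝ) {l : List V} {a b : V} (hn : l.Nodup)
    (ha : l.head? = some a) (hb : l.getLast? = some b) :
    ∑ e ∈ arcsOf l, (g e.1 - g e.2) = g a - g b := by
  induction l generalizing a with
  | nil => simp at ha
  | cons x l ih =>
    simp only [List.head?_cons, Option.some.injEq] at ha
    subst ha
    cases l with
    | nil => simp at hb; subst hb; simp [arcs_single]
    | cons y l =>
      rw [List.nodup_cons] at hn
      rw [arcs_cons, Finset.sum_insert (fun h => hn.1 (arcs_fst h)),
        ih (a := y) hn.2 (by simp) (by simpa using hb)]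
      ring

lemma net_eq (E : Finset (V × V)) (f : V × V → ℝ) (v : V) :
    ∑ e ∈ E.filter (fun e => e.1 = v), f e - ∑ e ∈ E.filter (fun e => e.2 = v), f e
      = ∑ e ∈ E, f e * ((if e.1 = v then 1 else 0) - (if e.2 = v then 1 else 0)) := by
  rw [Finset.sum_filter, Finset.sum_filter, ← Finset.sum_sub_distrib]
  apply Finset.sum_congr rfl
  intro e _
  split_ifs <;> ring

/-- superposition of path flows -/
def pflow (c : V × V → ℝ) (F : Finset (Finset (V × V))) (e : V × V) : ℝ :=
  ∑ P ∈ F, if e ∈ P then pathCap c P else 0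

lemma pflow_net (E : Finset (V × V)) (c : V × V → ℝ) (s t : V) (F : Finset (Finset (V × V)))
    (hF : ∀ P ∈ F, IsSTPath E s t P) (v : V) :
    ∑ e ∈ E, pflow c F e * ((if e.1 = v then 1 else 0) - (if e.2 = v then 1 else 0))
      = (∑ P ∈ F, pathCap c P) * ((if s = v then 1 else 0) - (if t = v then 1 else 0)) := by
  simp only [pflow, Finset.sum_mul]
  rw [Finset.sum_comm]
  apply Finset.sum_congr rfl
  intro P hP
  obtain ⟨l, hl, rfl⟩ := hF P hP
  rw [← telescope (fun u => if u = v then (1 : ℝ) else 0) hl.1 hl.2.1 hl.2.2.1, Finset.mul_sum]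
  rw [← Finset.sum_subset (path_arcs hl)]
  · apply Finset.sum_congr rfl
    intro e he
    simp [he]
  · intro e _ he
    simp [he]

section game
variable {E : Finset (V × V)} {c : V × V → ℝ} {s t : V} {γ : Finset (V × V) → ℝ}

lemma pflow_le (hst : s ≠ t) (hγ : IsFlowGame E c s t γ) (S : Finset (V × V)) (hS : S ⊆ E)
    (F : Finset (Finset (V × V))) (hF : ∀ P ∈ F, IsSTPath E s t P ∧ P ⊆ S)
    (h0 : ∀ P ∈ F, 0 ≤ pathCap c P)
    (hcap : ∀ e ∈ E, pflow c F e ≤ c e) : ∑ P ∈ F, pathCap c P ≤ γ S := by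
  apply (hγ S hS).2
  refine ⟨pflow c F, ⟨?_, ?_, ?_⟩, ?_⟩
  · intro e he
    refine ⟨Finset.sum_nonneg fun P hP => ?_, hcap e he⟩
    split_ifs
    · exact h0 P hP
    · exact le_rfl
  · intro e he
    apply Finset.sum_eq_zero
    intro P hP
    rw [if_neg fun h => he ((hF P hP).2 h)]
  · intro v hs ht
    have := pflow_net E c s t F (fun P hP => (hF P hP).1) v
    rw [← net_eq, if_neg hs.symm, if_neg ht.symm] at this
    linarith
  · have := pflow_net E c s t F (fun P hP => (hF P hP).1) s
    rw [← net_eq, if_pos rfl, if_neg hst.symm] at this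
    rw [flowValue, this]
    ring

lemma cutA [Fintype V] (hγ : IsFlowGame E c s t γ)
    (S : Finset (V × V)) (hS : S ⊆ E) (A : V → Prop) (hs : A s) (ht : ¬ A t) :
    γ S ≤ ∑ e ∈ S.filter (fun e => A e.1 ∧ ¬ A e.2), c e := by
  obtain ⟨f, ⟨hf1, hf2, hf3⟩, hv⟩ := (hγ S hS).1
  have h1 : flowValue E s f = ∑ v ∈ (Finset.univ.filter A),
      (∑ e ∈ E, f e * ((if e.1 = v then 1 else 0) - (if e.2 = v then 1 else 0))) := by
    rw [Finset.sum_eq_single_of_mem s (by simp [hs])]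
    · rw [← net_eq]; rfl
    · intro v hv hvs
      rw [← net_eq, hf3 v hvs (by rintro rfl; simp at hv; exact ht hv)]
      ring
  rw [← hv, h1, Finset.sum_comm, Finset.sum_filter, ← Finset.sum_subset hS]
  · apply Finset.sum_le_sum
    intro e he
    have h2 := hf1 e (hS he)
    rw [← Finset.mul_sum, Finset.sum_sub_distrib]
    simp only [Finset.sum_ite_eq, Finset.mem_filter, Finset.mem_univ, true_and]
    by_cases a1 : A e.1 <;> by_cases a2 : A e.2 <;> simp [a1, a2] <;> linarith
  · intro e _ he
    simp [hf2 e he]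

lemma cutK [Fintype V] (hγ : IsFlowGame E c s t γ) (hc : ∀ e ∈ E, 0 < c e)
    (S : Finset (V × V)) (hS : S ⊆ E) (K : Finset (V × V)) (hK : K ⊆ E)
    (h : ∀ P, IsSTPath E s t P → P ⊆ S → ∃ e ∈ P, e ∈ K) :
    γ S ≤ ∑ e ∈ K, c e := by
  have := cutA hγ S hS (fun v => Relation.ReflTransGen (fun x y => (x, y) ∈ S \ K) s v) .refl ?_
  · refine this.trans (Finset.sum_le_sum_of_subset_of_nonneg ?_ fun e he _ => (hc e (hK he)).le)
    rintro ⟨x, y⟩ he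
    simp only [Finset.mem_filter] at he
    by_contra hk
    exact he.2.2 (he.2.1.tail (by simp [he.1, hk]))
  · intro hr
    obtain ⟨l, hl⟩ := reach_path _ hr
    have ha := path_arcs hl
    obtain ⟨e, he, hk⟩ := h (arcsOf l)
      ⟨l, path_mono hl ((ha.trans Finset.sdiff_subset).trans hS), rfl⟩
      (ha.trans Finset.sdiff_subset)
    exact (Finset.mem_sdiff.1 (ha he)).2 hk

lemma path_ne (hst : s ≠ t) {P : Finset (V × V)} (h : IsSTPath E s t P) : P.Nonempty := by
  obtain ⟨l, hl, rfl⟩ := h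
  obtain ⟨_, h1, h2, _⟩ := hl
  match l, h1, h2 with
  | [a], h1, h2 => simp at h1 h2; exact absurd (h1.symm.trans h2) hst
  | a :: b :: l, _, _ => rw [arcs_cons]; simp

lemma path_sub {P : Finset (V × V)} (h : IsSTPath E s t P) : P ⊆ E := by
  obtain ⟨l, hl, rfl⟩ := h
  exact path_arcs hl

lemma cap_le {P : Finset (V × V)} {e : V × V} (h : e ∈ P) : pathCap c P ≤ c e :=
  csInf_le (P.finite_toSet.image c).bddBelow ⟨e, h, rfl⟩

lemma cap_mem (hst : s ≠ t) {P : Finset (V × V)} (h : IsSTPath E s t P) :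
    ∃ b ∈ P, c b = pathCap c P := by
  have hn : (c '' (P : Set (V × V))).Nonempty := ((path_ne hst h).to_set).image c
  obtain ⟨b, hb, e⟩ := hn.csInf_mem (P.finite_toSet.image c)
  exact ⟨b, hb, e⟩

lemma cap_pos (hst : s ≠ t) (hc : ∀ e ∈ E, 0 < c e) {P : Finset (V × V)}
    (h : IsSTPath E s t P) : 0 < pathCap c P := by
  obtain ⟨b, hb, e⟩ := cap_mem (c := c) hst h
  rw [← e]
  exact hc b (path_sub h hb)

lemma path_eq_of_subset {P Q : Finset (V × V)} (hP : IsSTPath E s t P) (hQ : IsSTPath E s t Q)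
    (h : P ⊆ Q) : P = Q := by
  obtain ⟨l, hl, rfl⟩ := hP
  obtain ⟨m, hm, rfl⟩ := hQ
  rw [arcs_eq_of_subset hl.1 hm.1 hl.2.1 hm.2.1 hl.2.2.1 hm.2.2.1 h]

lemma mem_stPaths {P : Finset (V × V)} : P ∈ stPaths E s t ↔ IsSTPath E s t P := by
  simp only [stPaths, Finset.mem_filter, Finset.mem_powerset, and_iff_right_iff_imp]
  exact path_sub

/-- reverse direction -/
lemma conv_of [Fintype V] (hst : s ≠ t) (hc : ∀ e ∈ E, 0 < c e) (hγ : IsFlowGame E c s t γ)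
    (h2 : ∀ b : V × V, IsBottleneck E c s t b →
          ∃! P : Finset (V × V), IsSTPath E s t P ∧ b ∈ P)
    (h3 : ∀ e ∈ E, ¬ IsBottleneck E c s t e →
          ∑ P ∈ (stPaths E s t).filter (fun P => e ∈ P), pathCap c P ≤ c e) :
    GameConvex E γ := by
  have key : ∀ S ⊆ E, γ S = ∑ P ∈ stPaths E s t, if P ⊆ S then pathCap c P else 0 := by
    intro S hS
    rw [← Finset.sum_filter]
    apply le_antisymm
    · have : Nonempty (V × V) := ⟨(s, s)⟩
      choose! b hb hb' using fun P (h : IsSTPath E s t P) => cap_mem (c := c) hst h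
      refine (cutK hγ hc S hS (((stPaths E s t).filter (· ⊆ S)).image b) ?_ ?_).trans ?_
      · intro e he
        simp only [Finset.mem_image, Finset.mem_filter, mem_stPaths] at he
        obtain ⟨P, hP, rfl⟩ := he
        exact hS (hP.2 (hb P hP.1))
      · intro P hP hPS
        exact ⟨b P, hb P hP, Finset.mem_image_of_mem _ (by simp [mem_stPaths, hP, hPS])⟩
      · refine (Finset.sum_image_le_of_nonneg ?_).trans (Finset.sum_le_sum ?_)
        · intro P hP
          simp only [Finset.mem_image, Finset.mem_filter, mem_stPaths] at hP
          first
          | exact (hc _ (path_sub hP.1 (hb P hP.1))).le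
          | (obtain ⟨Q, hQ, rfl⟩ := hP
             exact (hc _ (path_sub hQ.1 (hb Q hQ.1))).le)
        · intro P hP
          simp only [Finset.mem_filter, mem_stPaths] at hP
          exact (hb' P hP.1).le
    · apply pflow_le hst hγ S hS
      · intro P hP
        simpa [mem_stPaths] using hP
      · intro P hP
        simp only [Finset.mem_filter, mem_stPaths] at hP
        exact (cap_pos hst hc hP.1).le
      · intro e he
        have hle : pflow c ((stPaths E s t).filter (· ⊆ S)) e
            ≤ ∑ P ∈ (stPaths E s t).filter (fun P => e ∈ P), pathCap c P := by
          rw [pflow, ← Finset.sum_filter]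
          apply Finset.sum_le_sum_of_subset_of_nonneg
          · intro P hP
            simp only [Finset.mem_filter] at hP ⊢
            exact ⟨hP.1.1, hP.2⟩
          · intro P hP _
            simp only [Finset.mem_filter, mem_stPaths] at hP
            exact (cap_pos hst hc hP.1).le
        refine hle.trans ?_
        by_cases hb : IsBottleneck E c s t e
        · obtain ⟨P, hP, hu⟩ := h2 e hb
          have : (stPaths E s t).filter (fun P => e ∈ P) = {P} := by
            ext Q
            simp only [Finset.mem_filter, mem_stPaths, Finset.mem_singleton]
            exact ⟨fun h => hu Q h, fun h => h ▸ hP⟩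
          rw [this, Finset.sum_singleton]
          exact cap_le hP.2
        · exact h3 e he hb
  intro e he S T hST hT
  have hT' : T ⊆ E := hT.trans (Finset.erase_subset _ _)
  have heT : e ∉ T := fun h => by simpa using hT h
  rw [key _ (Finset.insert_subset he hT'), key _ hT', key _ (hST.trans hT'),
    key _ (Finset.insert_subset he (hST.trans hT')), ← Finset.sum_sub_distrib,
    ← Finset.sum_sub_distrib]
  apply Finset.sum_le_sum
  intro P hP
  have hp := (cap_pos hst hc (mem_stPaths.1 hP)).le
  by_cases a1 : P ⊆ S
  · have a2 := a1.trans hST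
    rw [if_pos a1, if_pos a2, if_pos (a1.trans (Finset.subset_insert _ _)),
      if_pos (a2.trans (Finset.subset_insert _ _))]
  · rw [if_neg a1]
    by_cases a3 : P ⊆ insert e S
    · have heP : e ∈ P := by
        by_contra h
        exact a1 ((Finset.subset_insert_iff_of_notMem h).1 a3)
      rw [if_pos a3, if_pos (a3.trans (Finset.insert_subset_insert _ hST)),
        if_neg (fun h => heT (h heP))]
    · rw [if_neg a3]
      by_cases a2 : P ⊆ T
      · rw [if_pos a2, if_pos (a2.trans (Finset.subset_insert _ _))]; simp
      · rw [if_neg a2]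
        split_ifs <;> simp [hp]

lemma supermod (hG : GameConvex E γ) (A B : Finset (V × V)) (hA : A ⊆ E) (hB : B ⊆ E) :
    γ A + γ B ≤ γ (A ∪ B) + γ (A ∩ B) := by
  have key : ∀ D : Finset (V × V), ∀ S T, S ⊆ T → T ⊆ E → D ⊆ E → Disjoint T D →
      γ (S ∪ D) - γ S ≤ γ (T ∪ D) - γ T := by
    intro D
    induction D using Finset.induction_on with
    | empty => intro S T _ _ _ _; simp
    | insert e D he ih =>
      intro S T hST hT hD hdis
      rw [Finset.insert_subset_iff] at hD
      rw [Finset.disjoint_insert_right] at hdis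
      have h1 := ih S T hST hT hD.2 hdis.2
      have h2 := hG e hD.1 (S ∪ D) (T ∪ D) (Finset.union_subset_union_left hST) (by
        intro x hx
        rw [Finset.mem_erase]
        refine ⟨?_, Finset.union_subset hT hD.2 hx⟩
        rintro rfl
        rcases Finset.mem_union.1 hx with h | h
        · exact hdis.1 h
        · exact he h)
      rw [Finset.union_insert, Finset.union_insert]
      linarith
  have := key (A \ B) (A ∩ B) B Finset.inter_subset_right hB (Finset.sdiff_subset.trans hA)
    Finset.disjoint_sdiff
  rw [Finset.union_sdiff_self_eq_union, Finset.union_comm B A, Finset.union_comm (A ∩ B),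
    Finset.sdiff_union_inter] at this
  linarith

lemma gpath_ge (hst : s ≠ t) (hc : ∀ e ∈ E, 0 < c e) (hγ : IsFlowGame E c s t γ)
    {P : Finset (V × V)} (hP : IsSTPath E s t P) : pathCap c P ≤ γ P := by
  have := pflow_le hst hγ P (path_sub hP) {P} (by simpa using hP)
    (by simpa using (cap_pos hst hc hP).le) (by
      intro e he
      simp only [pflow, Finset.sum_singleton]
      split_ifs with h
      · exact cap_le h
      · exact (hc e he).le)
  simpa using this

/-- a coalition properly inside a path earns at most zero -/
lemma sub_zero' [Fintype V] (hc : ∀ e ∈ E, 0 < c e) (hγ : IsFlowGame E c s t γ)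
    {P S : Finset (V × V)} (hP : IsSTPath E s t P) (hS : S ⊆ P) (hne : S ≠ P) : γ S ≤ 0 := by
  have := cutK hγ hc S (hS.trans (path_sub hP)) ∅ (by simp) (by
    intro Q hQ hQS
    have := path_eq_of_subset hQ hP (hQS.trans hS)
    exact absurd (hS.antisymm (this ▸ hQS)) hne)
  simpa using this

lemma pair_lower [Fintype V] (hst : s ≠ t) (hc : ∀ e ∈ E, 0 < c e) (hγ : IsFlowGame E c s t γ)
    (hG : GameConvex E γ) {P Q : Finset (V × V)} (hP : IsSTPath E s t P)
    (hQ : IsSTPath E s t Q) (hne : P ≠ Q) : pathCap c P + pathCap c Q ≤ γ (P ∪ Q) := by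
  have h1 := supermod hG P Q (path_sub hP) (path_sub hQ)
  have h2 := gpath_ge hst hc hγ hP
  have h3 := gpath_ge hst hc hγ hQ
  have h4 := sub_zero' hc hγ hP (S := P ∩ Q) Finset.inter_subset_left (by
    intro h
    exact hne (path_eq_of_subset hP hQ (Finset.inter_eq_left.1 h)))
  linarith

lemma cut_one [Fintype V] (hc : ∀ e ∈ E, 0 < c e) (hγ : IsFlowGame E c s t γ)
    (S : Finset (V × V)) (hS : S ⊆ E) (A : V → Prop) (hs : A s) (ht : ¬ A t) (b : V × V)
    (hb : b ∈ E) (h : ∀ u w, (u, w) ∈ S → A u → ¬ A w → (u, w) = b) : γ S ≤ c b := by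
  refine (cutA hγ S hS A hs ht).trans ?_
  rw [← Finset.sum_singleton c b]
  apply Finset.sum_le_sum_of_subset_of_nonneg
  · rintro ⟨u, w⟩ he
    simp only [Finset.mem_filter] at he
    simpa using h u w he.1 he.2.1 he.2.2
  · intro e he _
    simp only [Finset.mem_singleton] at he
    exact (hc e (he ▸ hb)).le

lemma head_mem {l1 l2 : List V} {x a : V} (h : (l1 ++ x :: l2).head? = some a) :
    a ∈ l1 ++ [x] := by
  cases l1 <;> simp at h ⊢ <;> simp [h]

lemma last_mem {l1 l2 : List V} {y b : V} (h : (l1 ++ y :: l2).getLast? = some b) :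
    b ∈ y :: l2 := by
  rw [List.getLast?_append_of_ne_nil _ (by simp)] at h
  exact List.mem_of_getLast? h

lemma split_disj {l1 l2 : List V} {x y v : V} (h : (l1 ++ x :: y :: l2).Nodup)
    (h1 : v ∈ l1 ++ [x]) (h2 : v ∈ y :: l2) : False := by
  rw [List.append_cons] at h
  exact (List.nodup_append.1 h).2.2 v h1 v h2 rfl

lemma theta_pre [Fintype V] (hc : ∀ e ∈ E, 0 < c e) (hγ : IsFlowGame E c s t γ)
    {l r1 r2 : List V} {x y : V} (h1 : IsPathList E s t (l ++ x :: y :: r1))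
    (h2 : IsPathList E s t (l ++ x :: y :: r2)) :
    γ (arcsOf (l ++ x :: y :: r1) ∪ arcsOf (l ++ x :: y :: r2)) ≤ c (x, y) := by
  apply cut_one hc hγ _ (Finset.union_subset (path_arcs h1) (path_arcs h2))
    (fun v => v ∈ l ++ [x]) (head_mem h1.2.1)
  · intro h
    refine split_disj h1.1 h (last_mem (l1 := l ++ [x]) ?_)
    simpa using h1.2.2.1
  · exact path_arcs h1 (mem_arcs.2 ⟨_, _, rfl⟩)
  · intro u w huw hu hw
    have : ∀ r, (l ++ x :: y :: r).Nodup → (u, w) ∈ arcsOf (l ++ x :: y :: r) →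
        (u, w) = (x, y) := by
      intro r hn h
      rcases mem_arcs_split h with h | h | h
      · exact absurd (arcs_snd h) hw
      · exact h
      · exact (split_disj hn hu (arcs_fst h)).elim
    rcases Finset.mem_union.1 huw with h | h
    · exact this _ h1.1 h
    · exact this _ h2.1 h

lemma theta_suf [Fintype V] (hc : ∀ e ∈ E, 0 < c e) (hγ : IsFlowGame E c s t γ)
    {l1 l2 r : List V} {x y : V} (h1 : IsPathList E s t (l1 ++ x :: y :: r))
    (h2 : IsPathList E s t (l2 ++ x :: y :: r)) :
    γ (arcsOf (l1 ++ x :: y :: r) ∪ arcsOf (l2 ++ x :: y :: r)) ≤ c (x, y) := by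
  apply cut_one hc hγ _ (Finset.union_subset (path_arcs h1) (path_arcs h2))
    (fun v => v ∉ y :: r)
  · intro h
    exact split_disj h1.1 (head_mem h1.2.1) h
  · intro h
    refine h (last_mem (l1 := l1 ++ [x]) ?_)
    simpa using h1.2.2.1
  · exact path_arcs h1 (mem_arcs.2 ⟨_, _, rfl⟩)
  · intro u w huw hu hw
    have : ∀ l, (l ++ x :: y :: r).Nodup → (u, w) ∈ arcsOf (l ++ x :: y :: r) →
        (u, w) = (x, y) := by
      intro l hn h
      rcases mem_arcs_split h with h | h | h
      · exact (split_disj hn (arcs_snd h) (not_not.1 hw)).elim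
      · exact h
      · exact absurd (arcs_fst h) hu
    rcases Finset.mem_union.1 huw with h | h
    · exact this _ h1.1 h
    · exact this _ h2.1 h

/-- common arc of a theta, at the shared prefix or suffix, is no bottleneck -/
lemma theta [Fintype V] (hst : s ≠ t) (hc : ∀ e ∈ E, 0 < c e) (hγ : IsFlowGame E c s t γ)
    (hG : GameConvex E γ) {L M1 M2 N : List V} {a z : V} {b : V × V}
    (h1 : IsPathList E s t (L ++ a :: (M1 ++ z :: N)))
    (h2 : IsPathList E s t (L ++ a :: (M2 ++ z :: N)))
    (hne : arcsOf (L ++ a :: (M1 ++ z :: N)) ≠ arcsOf (L ++ a :: (M2 ++ z :: N)))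
    (hb : b ∈ arcsOf (L ++ [a]) ∨ b ∈ arcsOf (z :: N))
    (hcb : c b = pathCap c (arcsOf (L ++ a :: (M1 ++ z :: N)))) : False := by
  have hp := pair_lower hst hc hγ hG ⟨_, h1, rfl⟩ ⟨_, h2, rfl⟩ hne
  have hpos := cap_pos hst hc ⟨_, h2, rfl⟩
  obtain ⟨x, y⟩ := b
  have : γ (arcsOf (L ++ a :: (M1 ++ z :: N)) ∪ arcsOf (L ++ a :: (M2 ++ z :: N)))
      ≤ c (x, y) := by
    rcases hb with hb | hb
    · obtain ⟨l1, l2, e⟩ := mem_arcs.1 hb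
      have e' : ∀ M, L ++ a :: M = l1 ++ x :: y :: (l2 ++ M) := by
        intro M
        rw [List.append_cons, e]; simp
      rw [e'] at h1 h2
      rw [e', e']
      exact theta_pre hc hγ h1 h2
    · obtain ⟨l1, l2, e⟩ := mem_arcs.1 hb
      have e' : ∀ M, L ++ a :: (M ++ z :: N) = (L ++ a :: (M ++ l1)) ++ x :: y :: l2 := by
        intro M
        rw [e]; simp
      rw [e'] at h1 h2
      rw [e', e']
      exact theta_suf hc hγ h1 h2
  linarith

/-- first divergence and first return -/
lemma diverge {P Q : List V} (hP : IsPathList E s t P) (hQ : IsPathList E s t Q) (hne : P ≠ Q) :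
    ∃ L a M1 M2 z N1 N2, P = L ++ a :: (M1 ++ z :: N1) ∧ Q = L ++ a :: (M2 ++ z :: N2) ∧
      (∀ v ∈ M2, v ∉ P) ∧ ¬ (M1 = [] ∧ M2 = []) := by
  have h1 : ∀ (P Q : List V) (s : V), P.head? = some s → Q.head? = some s → P.getLast? = some t →
      Q.getLast? = some t → P.Nodup → Q.Nodup → P ≠ Q →
      ∃ L a P' Q', P = L ++ a :: P' ∧ Q = L ++ a :: Q' ∧ t ∈ P' ∧ t ∈ Q' ∧
        P'.head? ≠ Q'.head? := by
    intro P
    induction P with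
    | nil => intro Q s h; simp at h
    | cons x P ih =>
      intro Q s hx hx' ht ht' hn hn' hne
      simp only [List.head?_cons, Option.some.injEq] at hx
      subst hx
      cases Q with
      | nil => simp at hx'
      | cons x' Q =>
        simp only [List.head?_cons, Option.some.injEq] at hx'
        subst hx'
        have hPQ : P ≠ Q := fun h => hne (by rw [h])
        rw [List.nodup_cons] at hn hn'
        cases P with
        | nil =>
          cases Q with
          | nil => exact absurd rfl hPQ
          | cons y Q =>
            simp only [List.getLast?_singleton, Option.some.injEq] at ht
            subst ht
            rw [List.getLast?_cons_cons] at ht'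
            exact absurd (List.mem_of_getLast? ht') hn'.1
        | cons y P =>
          rw [List.getLast?_cons_cons] at ht
          cases Q with
          | nil =>
            simp only [List.getLast?_singleton, Option.some.injEq] at ht'
            subst ht'
            exact absurd (List.mem_of_getLast? ht) hn.1
          | cons y' Q =>
            rw [List.getLast?_cons_cons] at ht'
            by_cases hy : y = y'
            · subst hy
              obtain ⟨L, a, P', Q', e1, e2, h⟩ := ih (y :: Q) y rfl rfl ht ht' hn.2 hn'.2 hPQ
              exact ⟨x' :: L, a, P', Q', by rw [e1]; rfl, by rw [e2]; rfl, h⟩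
            · exact ⟨[], x', y :: P, y' :: Q, rfl, rfl, List.mem_of_getLast? ht,
                List.mem_of_getLast? ht', by simpa using hy⟩
  have h2 : ∀ (R Q : List V), (∃ v ∈ Q, v ∈ R) →
      ∃ M z N, Q = M ++ z :: N ∧ z ∈ R ∧ ∀ v ∈ M, v ∉ R := by
    intro R Q
    induction Q with
    | nil => simp
    | cons q Q ih =>
      intro hv
      by_cases hq : q ∈ R
      · exact ⟨[], q, Q, rfl, hq, by simp⟩
      · obtain ⟨M, z, N, e, hz, hM⟩ := ih (by
          obtain ⟨v, hv1, hv2⟩ := hv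
          rcases List.mem_cons.1 hv1 with rfl | h
          · exact absurd hv2 hq
          · exact ⟨v, h, hv2⟩)
        refine ⟨q :: M, z, N, by simp [e], hz, ?_⟩
        intro v hv
        rcases List.mem_cons.1 hv with rfl | h
        · exact hq
        · exact hM v h
  obtain ⟨L, a, P', Q', e1, e2, t1, t2, hh⟩ :=
    h1 P Q s hP.2.1 hQ.2.1 hP.2.2.1 hQ.2.2.1 hP.1 hQ.1 hne
  obtain ⟨M2, z, N2, e3, hz, hM⟩ := h2 P' Q' ⟨t, t2, t1⟩
  obtain ⟨M1, N1, e4⟩ := List.append_of_mem hz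
  refine ⟨L, a, M1, M2, z, N1, N2, by rw [e1, e4], by rw [e2, e3], ?_, ?_⟩
  · intro v hv hvP
    rw [e1, List.append_cons, List.mem_append] at hvP
    rcases hvP with h | h
    · have hn := hQ.1
      rw [e2, List.append_cons] at hn
      exact (List.nodup_append.1 hn).2.2 v h v (by rw [e3]; simp [hv]) rfl
    · exact hM v hv h
  · rintro ⟨rfl, rfl⟩
    apply hh
    rw [e3, e4]; rfl

lemma arcs_three (L M N : List V) (a z : V) :
    arcsOf (L ++ a :: (M ++ z :: N)) =
      arcsOf (L ++ [a]) ∪ arcsOf (a :: (M ++ [z])) ∪ arcsOf (z :: N) := by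
  rw [arcs_append, ← List.cons_append, arcs_append (a :: M), Finset.union_assoc]
  rfl

/-- predecessor of `z` in a nodup list -/
lemma pred_unique {l1 l2 : List V} {z u : V} (hn : (l1 ++ z :: l2).Nodup)
    (h : (u, z) ∈ arcsOf (l1 ++ z :: l2)) : l1.getLast? = some u := by
  rw [arcs_append, Finset.mem_union] at h
  rw [List.nodup_append] at hn
  rcases h with h | h
  · obtain ⟨m1, m2, e⟩ := mem_arcs.1 h
    rcases List.eq_nil_or_concat m2 with rfl | ⟨m, q, rfl⟩
    · have : l1 ++ [z] = (m1 ++ [u]) ++ [z] := by rw [e]; simp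
      rw [List.append_cancel_right this]
      simp
    · have : l1 ++ [z] = (m1 ++ u :: z :: m) ++ [q] := by rw [e]; simp
      have h2 := List.append_inj' this rfl
      exact absurd rfl (hn.2.2 z (by rw [h2.1]; simp) z (by simp))
  · obtain ⟨m1, m2, e⟩ := mem_arcs.1 h
    cases m1 with
    | nil =>
      simp only [List.nil_append, List.cons.injEq] at e
      have := hn.2.1
      rw [e.2] at this
      simp at this
    | cons q m =>
      simp only [List.cons_append, List.cons.injEq] at e
      have := hn.2.1
      rw [e.2] at this
      simp at this

lemma bott [Fintype V] (hst : s ≠ t) (hc : ∀ e ∈ E, 0 < c e) (hγ : IsFlowGame E c s t γ)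
    (hG : GameConvex E γ) (n : ℕ) : ∀ (P Q : List V) (b : V × V), IsPathList E s t P →
      IsPathList E s t Q → P ≠ Q → (arcsOf P ∪ arcsOf Q).card = n → b ∈ arcsOf P →
      b ∈ arcsOf Q → c b = pathCap c (arcsOf P) → False := by
  induction n using Nat.strong_induction_on with
  | _ n ih =>
  intro P Q b hP hQ hne hcard hbP hbQ hcb
  obtain ⟨L, a, M1, M2, z, N1, N2, eP, eQ, hM, hMM⟩ := diverge hP hQ hne
  have hX : IsPathList E s t (L ++ a :: (M2 ++ z :: N1)) := by
    refine ⟨?_, ?_, ?_, ?_⟩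
    · have h1 := hP.1
      have h2 := hQ.1
      rw [eP] at h1 hM
      rw [eQ] at h2
      simp only [List.nodup_append, List.nodup_cons, List.mem_append, List.mem_cons] at h1 h2 hM ⊢
      grind
    · have := hP.2.1
      rw [eP] at this
      cases L <;> simpa using this
    · have := hP.2.2.1
      rw [eP] at this
      rw [← List.cons_append, ← List.append_assoc,
        List.getLast?_append_of_ne_nil _ (by simp)] at this ⊢
      exact this
    · rw [chain_iff, arcs_three]
      have h1 := path_arcs hP
      have h2 := path_arcs hQ
      rw [eP, arcs_three] at h1
      rw [eQ, arcs_three] at h2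
      exact Finset.union_subset (Finset.union_subset_left h2) (Finset.union_subset_right h1)
  have hlast : (L ++ a :: M1).getLast? ≠ (L ++ a :: M2).getLast? := by
    intro h
    rw [List.getLast?_append_of_ne_nil _ (by simp),
      List.getLast?_append_of_ne_nil _ (by simp)] at h
    rcases List.eq_nil_or_concat M2 with rfl | ⟨m, q, rfl⟩
    · rcases List.eq_nil_or_concat M1 with rfl | ⟨m, q, rfl⟩
      · exact hMM ⟨rfl, rfl⟩
      · rw [List.concat_eq_append, ← List.cons_append, List.getLast?_concat] at h
        simp only [List.getLast?_singleton, Option.some.injEq] at h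
        subst h
        have := hP.1
        rw [eP] at this
        simp [List.nodup_append] at this
    · rw [List.concat_eq_append, ← List.cons_append, List.getLast?_concat] at h
      refine hM q (by simp) ?_
      have := List.mem_of_getLast? h
      rw [eP]
      simp only [List.mem_append, List.mem_cons] at this ⊢
      tauto
  have eP' : P = (L ++ a :: M1) ++ z :: N1 := by rw [eP]; simp
  have eQ' : Q = (L ++ a :: M2) ++ z :: N2 := by rw [eQ]; simp
  have eX' : L ++ a :: (M2 ++ z :: N1) = (L ++ a :: M2) ++ z :: N1 := by simp
  have hXP : arcsOf (L ++ a :: (M2 ++ z :: N1)) ≠ arcsOf P := by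
    intro h
    have := arcs_eq_of_subset hX.1 hP.1 hX.2.1 hP.2.1 hX.2.2.1 hP.2.2.1 h.subset
    rw [eX', eP'] at this
    exact hlast (by rw [List.append_cancel_right this])
  by_cases hXQ : L ++ a :: (M2 ++ z :: N1) = Q
  · rw [← hXQ, arcs_three, Finset.mem_union, Finset.mem_union] at hbQ
    have hth : (b ∈ arcsOf (L ++ [a]) ∨ b ∈ arcsOf (z :: N1)) → False := by
      intro h
      rw [eP] at hP hXP hcb
      exact theta hst hc hγ hG hP hX hXP.symm h hcb
    rcases hbQ with (h | h) | h
    · exact hth (.inl h)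
    · obtain ⟨x, y⟩ := b
      have hy : y ∈ M2 ++ [z] := by
        obtain ⟨l1, l2, e⟩ := mem_arcs.1 h
        cases l1 with
        | nil =>
          simp only [List.nil_append, List.cons.injEq] at e
          rw [e.2]; simp
        | cons q l1 =>
          simp only [List.cons_append, List.cons.injEq] at e
          rw [e.2]; simp
      rcases List.mem_append.1 hy with hy | hy
      · exact hM y hy (arcs_snd hbP)
      · simp only [List.mem_singleton] at hy
        subst hy
        have hbQ' : (x, y) ∈ arcsOf (L ++ a :: (M2 ++ y :: N1)) := by
          rw [arcs_three]
          simp only [Finset.mem_union]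
          tauto
        have hPn := hP.1
        have hXn := hX.1
        rw [eP'] at hbP hPn
        rw [eX'] at hbQ' hXn
        exact hlast ((pred_unique hPn hbP).trans (pred_unique hXn hbQ').symm)
    · exact hth (.inr h)
  · obtain ⟨bX, hbX, hcX⟩ := cap_mem (c := c) hst (E := E) ⟨_, hX, rfl⟩
    have hbX' := hbX
    rw [arcs_three, Finset.mem_union, Finset.mem_union] at hbX'
    have hth : (bX ∈ arcsOf (L ++ [a]) ∨ bX ∈ arcsOf (z :: N1)) → False := by
      intro h
      rw [eP] at hP hXP
      exact theta hst hc hγ hG hX hP hXP h hcX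
    rcases hbX' with (h | h) | h
    · exact hth (.inl h)
    · have hbXQ : bX ∈ arcsOf Q := by
        rw [eQ, arcs_three]
        simp only [Finset.mem_union]
        tauto
      refine ih _ ?_ _ Q bX hX hQ hXQ rfl hbX hbXQ hcX
      rw [← hcard]
      apply Finset.card_lt_card
      rw [Finset.ssubset_iff_of_subset]
      · obtain ⟨l, u, hu⟩ : ∃ l u, L ++ a :: M1 = l ++ [u] := by
          rcases List.eq_nil_or_concat (L ++ a :: M1) with h | ⟨l, u, h⟩
          · simp at h
          · exact ⟨l, u, by simpa using h⟩
        have hup : (L ++ a :: M1).getLast? = some u := by rw [hu]; simp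
        refine ⟨(u, z), ?_, ?_⟩
        · apply Finset.mem_union_left
          rw [mem_arcs]
          exact ⟨l, N1, by rw [eP', hu]; simp⟩
        · intro h
          rw [Finset.mem_union] at h
          rcases h with h | h
          · have hn := hX.1
            rw [eX'] at h hn
            exact hlast (hup.trans (pred_unique hn h).symm)
          · have hn := hQ.1
            rw [eQ'] at h hn
            exact hlast (hup.trans (pred_unique hn h).symm)
      · rw [arcs_three L M2 N1, eP, eQ, arcs_three, arcs_three]
        intro e
        simp only [Finset.mem_union]
        tauto
    · exact hth (.inr h)

lemma cond2 [Fintype V] (hst : s ≠ t) (hc : ∀ e ∈ E, 0 < c e) (hγ : IsFlowGame E c s t γ)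
    (hG : GameConvex E γ) {P Q : Finset (V × V)} {b : V × V} (hP : IsSTPath E s t P)
    (hQ : IsSTPath E s t Q) (hbP : b ∈ P) (hbQ : b ∈ Q) (hcb : c b = pathCap c P) : Q = P := by
  obtain ⟨l, hl, rfl⟩ := hP
  obtain ⟨m, hm, rfl⟩ := hQ
  by_contra h
  exact bott hst hc hγ hG _ l m b hl hm (fun e => h (by rw [e])) rfl hbP hbQ hcb

lemma cond3 [Fintype V] (hst : s ≠ t) (hc : ∀ e ∈ E, 0 < c e) (hγ : IsFlowGame E c s t γ)
    (hG : GameConvex E γ) {e : V × V} (he : e ∈ E) :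
    ∑ P ∈ (stPaths E s t).filter (fun P => e ∈ P), pathCap c P ≤ c e := by
  have key : ∀ F : Finset (Finset (V × V)), (∀ P ∈ F, IsSTPath E s t P) →
      ∑ P ∈ F, pathCap c P ≤ γ (F.biUnion id) := by
    intro F
    induction F using Finset.induction_on with
    | empty =>
      intro _
      simpa using pflow_le (c := c) hst hγ ∅ (by simp) ∅ (by simp) (by simp)
        (by intro e he; simpa [pflow] using (hc e he).le)
    | insert P F hPF ih =>
      intro hF
      have hP := hF P (by simp)
      have hF' : ∀ Q ∈ F, IsSTPath E s t Q := fun Q hQ => hF Q (by simp [hQ])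
      have h1 := ih hF'
      rw [Finset.sum_insert hPF, Finset.biUnion_insert, id]
      have h2 := supermod hG P (F.biUnion id) (path_sub hP)
        (Finset.biUnion_subset.2 fun Q hQ => path_sub (hF' Q hQ))
      have h3 := gpath_ge hst hc hγ hP
      have h4 := sub_zero' hc hγ hP (S := P ∩ F.biUnion id) Finset.inter_subset_left (by
        intro h
        obtain ⟨b, hb, hcb⟩ := cap_mem (c := c) hst hP
        have hb' := Finset.inter_eq_left.1 h hb
        obtain ⟨Q, hQ, hbQ⟩ := Finset.mem_biUnion.1 hb'
        have := cond2 hst hc hγ hG hP (hF' Q hQ) hb hbQ hcb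
        exact hPF (this ▸ hQ))
      linarith
  refine (key _ ?_).trans ?_
  · intro P hP
    simp only [Finset.mem_filter, mem_stPaths] at hP
    exact hP.1
  · rw [← Finset.sum_singleton c e]
    apply cutK hγ hc
    · apply Finset.biUnion_subset.2
      intro P hP
      simp only [Finset.mem_filter, mem_stPaths] at hP
      exact path_sub hP.1
    · simpa using he
    · intro P hP hPS
      refine ⟨e, ?_, by simp⟩
      obtain ⟨b, hb, hcb⟩ := cap_mem (c := c) hst hP
      obtain ⟨Q, hQ, hbQ⟩ := Finset.mem_biUnion.1 (hPS hb)
      simp only [Finset.mem_filter, mem_stPaths] at hQ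
      have := cond2 hst hc hγ hG hP hQ.1 hb hbQ hcb
      exact this ▸ hQ.2

lemma walk_in_path [Fintype V] (hst : s ≠ t) (hc : ∀ e ∈ E, 0 < c e)
    (hγ : IsFlowGame E c s t γ) (hG : GameConvex E γ)
    (hcover : ∀ e ∈ E, ∃ P : Finset (V × V), IsSTPath E s t P ∧ e ∈ P) (l : List V) :
    ∀ x y, arcsOf (x :: y :: l) ⊆ E →
      ∃ W α β, IsPathList E s t W ∧ W = α ++ x :: y :: (l ++ β) := by
  induction l with
  | nil =>
    intro x y h
    obtain ⟨P, ⟨W, hW, rfl⟩, hm⟩ := hcover (x, y) (h (by simp [arcs_cons]))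
    obtain ⟨α, β, e⟩ := mem_arcs.1 hm
    exact ⟨W, α, β, hW, by simpa using e⟩
  | cons w l ih =>
    intro x y h
    rw [arcs_cons, Finset.insert_subset_iff] at h
    obtain ⟨W, α, β, hW, eW⟩ := ih y w h.2
    obtain ⟨_, ⟨Q, hQ, rfl⟩, hm⟩ := hcover (x, y) h.1
    obtain ⟨μ, ν, eQ⟩ := mem_arcs.1 hm
    have eQ' : Q = (μ ++ [x]) ++ y :: ν := by rw [eQ]; simp
    -- the switched walk
    have hWl := hW.2.2.1
    have hQl := hQ.2.2.1
    have hWh := hW.2.1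
    have hQh := hQ.2.1
    have hWn := hW.1
    have hQn := hQ.1
    rw [eW, List.getLast?_append_of_ne_nil _ (by simp)] at hWl
    rw [eQ', List.getLast?_append_of_ne_nil _ (by simp)] at hQl
    have hQh' : ((μ ++ [x]) ++ [y]).head? = some s := by
      rw [eQ] at hQh
      cases μ <;> simpa using hQh
    have hr1 : Relation.ReflTransGen
        (fun u v => (u, v) ∈ arcsOf ((μ ++ [x]) ++ [y]) ∪ arcsOf (y :: w :: (l ++ β))) s y := by
      cases hμ : ((μ ++ [x]) ++ [y]) with
      | nil => simp at hμ
      | cons q m =>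
        rw [hμ] at hQh'
        simp only [List.head?_cons, Option.some.injEq] at hQh'
        subst hQh'
        refine list_reach _ (l := m) ?_ Finset.subset_union_left
        rw [← hμ]; simp
    have hr2 : Relation.ReflTransGen
        (fun u v => (u, v) ∈ arcsOf ((μ ++ [x]) ++ [y]) ∪ arcsOf (y :: w :: (l ++ β))) y t :=
      list_reach _ hWl Finset.subset_union_right
    obtain ⟨R, hR⟩ := reach_path _ (hr1.trans hr2)
    have hRs := path_arcs hR
    have hsW : arcsOf (y :: w :: (l ++ β)) ⊆ arcsOf W := by
      rw [eW, arcs_append]; exact Finset.subset_union_right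
    have hsQ : arcsOf ((μ ++ [x]) ++ [y]) ⊆ arcsOf Q := by
      rw [eQ', arcs_append _ y ν]; exact Finset.subset_union_left
    have hRE : IsPathList E s t R := path_mono hR (hRs.trans
      (Finset.union_subset (hsQ.trans (path_arcs hQ)) (hsW.trans (path_arcs hW))))
    obtain ⟨b, hb, hcb⟩ := cap_mem (c := c) hst (E := E) ⟨R, hRE, rfl⟩
    rcases Finset.mem_union.1 (hRs hb) with hb' | hb'
    · -- R = Q
      have e := cond2 hst hc hγ hG ⟨R, hRE, rfl⟩ ⟨Q, hQ, rfl⟩ hb (hsQ hb') hcb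
      have hsub : arcsOf (y :: ν) ⊆ arcsOf (y :: w :: (l ++ β)) := by
        rintro ⟨u, v⟩ huv
        have : (u, v) ∈ arcsOf R := by
          rw [← e, eQ', arcs_append]; exact Finset.mem_union_right _ huv
        rcases Finset.mem_union.1 (hRs this) with h' | h'
        · exfalso
          have hu : u ∈ μ ++ [x] := by
            obtain ⟨m1, m2, em⟩ := mem_arcs.1 h'
            rcases List.eq_nil_or_concat m2 with rfl | ⟨m, q, rfl⟩
            · have : (μ ++ [x]) ++ [y] = (m1 ++ [u]) ++ [v] := by rw [em]; simp
              rw [(List.append_inj' this rfl).1]; simp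
            · have : (μ ++ [x]) ++ [y] = (m1 ++ u :: v :: m) ++ [q] := by rw [em]; simp
              rw [(List.append_inj' this rfl).1]; simp
          rw [eQ'] at hQn
          exact (List.nodup_append.1 hQn).2.2 u hu u (arcs_fst huv) rfl
        · exact h'
      have hWn' := hWn
      rw [eW] at hWn'
      have hQn' := hQn
      rw [eQ'] at hQn'
      have := arcs_eq_of_subset (List.nodup_append.1 hQn').2.1 (List.nodup_append.1 hWn').2.1
        (a := y) rfl rfl hQl hWl hsub
      exact ⟨Q, μ, β, hQ, by rw [eQ, this]; simp⟩
    · have e := cond2 hst hc hγ hG ⟨R, hRE, rfl⟩ ⟨W, hW, rfl⟩ hb (hsW hb') hcb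
      rw [eW] at hWn hWh
      have hsub : arcsOf (α ++ [y]) ⊆ arcsOf ((μ ++ [x]) ++ [y]) := by
        rintro ⟨u, v⟩ huv
        have : (u, v) ∈ arcsOf R := by
          rw [← e, eW, arcs_append]; exact Finset.mem_union_left _ huv
        rcases Finset.mem_union.1 (hRs this) with h' | h'
        · exact h'
        · exfalso
          have hu : u ∈ α := by
            obtain ⟨m1, m2, em⟩ := mem_arcs.1 huv
            rcases List.eq_nil_or_concat m2 with rfl | ⟨m, q, rfl⟩
            · have : α ++ [y] = (m1 ++ [u]) ++ [v] := by rw [em]; simp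
              rw [(List.append_inj' this rfl).1]; simp
            · have : α ++ [y] = (m1 ++ u :: v :: m) ++ [q] := by rw [em]; simp
              rw [(List.append_inj' this rfl).1]; simp
          exact (List.nodup_append.1 hWn).2.2 u hu u (arcs_fst h') rfl
      have hn1 : (α ++ [y]).Nodup := by
        rw [List.append_cons] at hWn
        exact (List.nodup_append.1 hWn).1
      have hn2 : ((μ ++ [x]) ++ [y]).Nodup := by
        rw [eQ', List.append_cons] at hQn
        exact (List.nodup_append.1 hQn).1
      have hh : (α ++ [y]).head? = some s := by
        cases α <;> simpa using hWh
      have := arcs_eq_of_subset hn1 hn2 hh hQh' (b := y) (by simp) (by simp) hsub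
      have := List.append_cancel_right this
      exact ⟨W, μ, β, hW, by rw [eW, this]; simp⟩

lemma cond1 [Fintype V] (hst : s ≠ t) (hc : ∀ e ∈ E, 0 < c e)
    (hγ : IsFlowGame E c s t γ) (hG : GameConvex E γ)
    (hcover : ∀ e ∈ E, ∃ P : Finset (V × V), IsSTPath E s t P ∧ e ∈ P) :
    ¬ HasDirectedCycle E := by
  rintro ⟨v, vs, hn, hch, hl⟩
  rw [chain_iff] at hch
  have hall : arcsOf ((v :: vs) ++ [v]) ⊆ E := by
    rcases List.eq_nil_or_concat (v :: vs) with h | ⟨m, q, h⟩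
    · simp at h
    · rw [List.concat_eq_append] at h
      have hq : (v :: vs).getLast (List.cons_ne_nil v vs) = q := by simp [h]
      rw [hq] at hl
      rw [h] at hch ⊢
      rw [List.append_assoc, List.singleton_append, arcs_append, arcs_cons, arcs_single]
      apply Finset.union_subset hch
      simpa using hl
  obtain ⟨y, l, e, hv⟩ : ∃ y l, vs ++ [v] = y :: l ∧ v ∈ y :: l := by
    cases h : vs ++ [v] with
    | nil => simp at h
    | cons y l => exact ⟨y, l, rfl, by rw [← h]; simp⟩
  rw [List.cons_append, e] at hall
  obtain ⟨W, α, β, hW, eW⟩ := walk_in_path hst hc hγ hG hcover l v y hall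
  have := hW.1
  rw [eW, List.nodup_append, List.nodup_cons] at this
  apply this.2.1.1
  simp only [List.mem_cons, List.mem_append] at hv ⊢
  tauto

end game
end Helpers

/-- Main characterization.  Suppose every arc of the flow network lies
on some `s`-`t` path.  The flow game is convex iff (i) the network is acyclic,
(ii) every bottleneck arc belongs to a unique `s`-`t` path, and (iii) every
non-bottleneck arc `e` satisfies `c(e) ≥ Σ_{P ∈ 𝒫_e} c(P)`. -/
theorem convexity_characterization
    {V : Type*} [Fintype V] [DecidableEq V]
    (E : Finset (V × V)) (c : V × V → ℝ) (s t : V) (γ : Finset (V × V) → ℝ)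
    (hst : s ≠ t) (hc : ∀ e ∈ E, 0 < c e)
    (hγ : IsFlowGame E c s t γ)
    (hcover : ∀ e ∈ E, ∃ P : Finset (V × V), IsSTPath E s t P ∧ e ∈ P)
 :
    GameConvex E γ ↔
      (¬ HasDirectedCycle E ∧
       (∀ b : V × V, IsBottleneck E c s t b →
          ∃! P : Finset (V × V), IsSTPath E s t P ∧ b ∈ P) ∧
       (∀ e ∈ E, ¬ IsBottleneck E c s t e →
          ∑ P ∈ (stPaths E s t).filter (fun P => e ∈ P), pathCap c P ≤ c e)) := by
  constructor
  · intro hG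
    refine ⟨cond1 hst hc hγ hG hcover, ?_, fun e he _ => cond3 hst hc hγ hG he⟩
    rintro b ⟨P, hP, hbP, hcb⟩
    exact ⟨P, ⟨hP, hbP⟩, fun Q hQ => cond2 hst hc hγ hG hP hQ.1 hbP hQ.2 hcb⟩
  · rintro ⟨_, h2, h3⟩
    exact conv_of hst hc hγ h2 h3
end
end

section
/- Let D = (V, E; c; s, t) be a flow network in which every arc belongs to at least one s-t path, and suppose that: (i) the directed graph (V, E) is acyclic; (ii) each bottleneck arc b ∈ B belongs to a unique s-t path; and (iii) each non-bottleneck arc e ∉ B satisfies c(e) ≥ Σ_{P ∈ 𝒫_e} c(P). Then for every coalition S ⊆ E, the characteristic function of the flow game satisfies γ(S) = Σ_{P ∈ 𝒫 : P ⊆ S} c(P), i.e., γ(S) is the sum of the capacities of all s-t paths fully contained in S. -/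
open scoped Classical
open Finset

noncomputable section

theorem aux_arcsOf_cons {V : Type*} [DecidableEq V] (a b : V) (l : List V) :
    arcsOf (a :: b :: l) = insert (a, b) (arcsOf (b :: l)) := by
  simp [arcsOf]

theorem aux_arcsOf_mem {V : Type*} [DecidableEq V] (vs : List V) (e : V × V)
    (h : e ∈ arcsOf vs) : e.1 ∈ vs := by
  obtain ⟨x, y⟩ := e
  simp only [arcsOf, List.mem_toFinset] at h
  exact (List.of_mem_zip h).1

theorem aux_arcsOf_subset {V : Type*} [DecidableEq V] (E : Finset (V × V)) (vs : List V)
    (h : vs.IsChain (fun x y => (x, y) ∈ E)) : arcsOf vs ⊆ E := by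
  induction vs with
  | nil => simp [arcsOf]
  | cons a l ih =>
    cases l with
    | nil => simp [arcsOf]
    | cons b l =>
      rw [List.isChain_cons_cons] at h
      rw [aux_arcsOf_cons]
      exact Finset.insert_subset h.1 (ih h.2)

theorem aux_isChain_arcsOf {V : Type*} [DecidableEq V] (E : Finset (V × V)) (vs : List V)
    (h : arcsOf vs ⊆ E) : vs.IsChain (fun x y => (x, y) ∈ E) := by
  induction vs with
  | nil => simp
  | cons a l ih =>
    cases l with
    | nil => simp
    | cons b l =>
      rw [aux_arcsOf_cons, Finset.insert_subset_iff] at h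
      rw [List.isChain_cons_cons]
      exact ⟨h.1, ih h.2⟩

theorem aux_div_path {V : Type*} [DecidableEq V] (b v : V) (vs : List V) : ∀ (a : V),
    vs.Nodup → vs.head? = some a → vs.getLast? = some b →
    ∑ e ∈ arcsOf vs, ((if e.1 = v then (1:ℝ) else 0) - (if e.2 = v then 1 else 0))
      = (if a = v then 1 else 0) - (if b = v then 1 else 0) := by
  induction vs with
  | nil => intro a _ h; simp at h
  | cons x l ih =>
    intro a hn h1 h2
    simp only [List.head?_cons, Option.some.injEq] at h1
    subst h1
    cases l with
    | nil =>
      simp at h2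
      subst h2
      simp [arcsOf]
    | cons y l =>
      rw [aux_arcsOf_cons, Finset.sum_insert, ih y (List.nodup_cons.1 hn).2 rfl]
      · simp
      · simpa [List.getLast?_cons_cons] using h2
      · intro hm
        exact (List.nodup_cons.1 hn).1 (aux_arcsOf_mem _ _ hm)

theorem aux_div_eq {V : Type*} [DecidableEq V] (E : Finset (V × V)) (f : V × V → ℝ) (v : V) :
    ∑ e ∈ E.filter (fun e => e.1 = v), f e - ∑ e ∈ E.filter (fun e => e.2 = v), f e
    = ∑ e ∈ E, f e * ((if e.1 = v then (1:ℝ) else 0) - (if e.2 = v then 1 else 0)) := by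
  rw [Finset.sum_filter, Finset.sum_filter, ← Finset.sum_sub_distrib]
  apply Finset.sum_congr rfl
  intro e _
  split_ifs <;> simp

theorem aux_path_nonempty {V : Type*} [DecidableEq V] {E : Finset (V × V)} {s t : V}
    (hst : s ≠ t) {P : Finset (V × V)} (h : IsSTPath E s t P) : P.Nonempty := by
  obtain ⟨vs, ⟨hn, h1, h2, _⟩, rfl⟩ := h
  rw [Finset.nonempty_iff_ne_empty]
  intro h0
  have := aux_div_path t s vs s hn h1 h2
  rw [h0] at this
  simp [hst.symm] at this

theorem aux_cap_le {V : Type*} (c : V × V → ℝ) (P : Finset (V × V)) {e : V × V} (he : e ∈ P) :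
    pathCap c P ≤ c e :=
  csInf_le (P.finite_toSet.image c).bddBelow ⟨e, he, rfl⟩

theorem aux_cap_mem {V : Type*} (c : V × V → ℝ) {P : Finset (V × V)} (h : P.Nonempty) :
    ∃ e ∈ P, c e = pathCap c P := by
  have : ((c '' (P : Set (V × V)))).Nonempty := h.to_set.image c
  obtain ⟨e, he, h'⟩ := this.csInf_mem (P.finite_toSet.image c)
  exact ⟨e, he, h'⟩

theorem aux_path_subset {V : Type*} [DecidableEq V] {E : Finset (V × V)} {s t : V}
    {P : Finset (V × V)} (h : IsSTPath E s t P) : P ⊆ E := by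
  obtain ⟨vs, ⟨_, _, _, h3⟩, rfl⟩ := h
  exact aux_arcsOf_subset E vs h3

theorem aux_mem_stPaths {V : Type*} [DecidableEq V] {E : Finset (V × V)} {s t : V}
    {P : Finset (V × V)} : P ∈ stPaths E s t ↔ IsSTPath E s t P := by
  simp only [stPaths, Finset.mem_filter, Finset.mem_powerset]
  exact ⟨fun h => h.2, fun h => ⟨aux_path_subset h, h⟩⟩

/-- Extending reachability by nodup lists by one arc. -/
theorem aux_extend {V : Type*} (A : Finset (V × V)) (s v w : V) (vs : List V)
    (h : IsPathList A s v vs) (hvw : (v, w) ∈ A) : ∃ ws, IsPathList A s w ws := by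
  obtain ⟨hn, h1, h2, h3⟩ := h
  by_cases hw : w ∈ vs
  · obtain ⟨l1, l2, rfl⟩ := List.append_of_mem hw
    have e : l1 ++ w :: l2 = (l1 ++ [w]) ++ l2 := by simp
    rw [e] at hn h1 h3
    refine ⟨l1 ++ [w], hn.of_append_left, ?_, by simp, ?_⟩
    · cases l1 <;> simpa using h1
    · exact (List.isChain_append.1 h3).1
  · refine ⟨vs ++ [w], ?_, ?_, by simp, ?_⟩
    · rw [List.nodup_append]
      refine ⟨hn, by simp, ?_⟩
      intro a ha b hb
      simp at hb
      subst hb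
      rintro rfl
      exact hw ha
    · simp [List.head?_append, h1]
    · refine List.isChain_append.2 ⟨h3, by simp, ?_⟩
      intro x hx y hy
      simp [h2] at hx hy
      subst hx; subst hy
      exact hvw

theorem aux_upper {V : Type*} [Fintype V] [DecidableEq V]
    (E : Finset (V × V)) (c : V × V → ℝ) (s t : V) (S C : Finset (V × V))
    (hst : s ≠ t) (hSE : S ⊆ E) (hCE : C ⊆ E)
    (hC : ∀ P, IsSTPath E s t P → P ⊆ S → ∃ e ∈ P, e ∈ C)
    (f : V × V → ℝ) (hf : IsFeasibleFlow E c s t S f) :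
    flowValue E s f ≤ ∑ e ∈ C, c e := by
  obtain ⟨hf1, hf2, hf3⟩ := hf
  set R : Finset V := Finset.univ.filter (fun v => ∃ vs, IsPathList (S \ C) s v vs) with hR
  have hs : s ∈ R := by
    simp only [hR, Finset.mem_filter, Finset.mem_univ, true_and]
    exact ⟨[s], by simp, rfl, rfl, List.isChain_singleton s⟩
  have ht : t ∉ R := by
    simp only [hR, Finset.mem_filter, Finset.mem_univ, true_and]
    rintro ⟨vs, hn, h1, h2, h3⟩
    have hsub := aux_arcsOf_subset _ _ h3
    have hsS : arcsOf vs ⊆ S := hsub.trans Finset.sdiff_subset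
    obtain ⟨e, he, heC⟩ := hC (arcsOf vs)
      ⟨vs, ⟨hn, h1, h2, aux_isChain_arcsOf E vs (hsS.trans hSE)⟩, rfl⟩ hsS
    exact (Finset.mem_sdiff.1 (hsub he)).2 heC
  have hcl : ∀ e ∈ S, e ∉ C → e.1 ∈ R → e.2 ∈ R := by
    rintro ⟨v, w⟩ he heC hv
    simp only [hR, Finset.mem_filter, Finset.mem_univ, true_and] at hv ⊢
    obtain ⟨vs, hvs⟩ := hv
    exact aux_extend _ s v w vs hvs (Finset.mem_sdiff.2 ⟨he, heC⟩)
  have hval : flowValue E s f = ∑ v ∈ R, ∑ e ∈ E,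
      f e * ((if e.1 = v then (1:ℝ) else 0) - (if e.2 = v then 1 else 0)) := by
    rw [Finset.sum_eq_single_of_mem s hs]
    · exact aux_div_eq E f s
    · intro v hv hvs
      rw [← aux_div_eq, hf3 v hvs (fun h => ht (h ▸ hv)), sub_self]
  rw [hval, Finset.sum_comm]
  calc _ = ∑ e ∈ E, f e * ((if e.1 ∈ R then (1:ℝ) else 0) - (if e.2 ∈ R then 1 else 0)) := by
        apply Finset.sum_congr rfl
        intro e _
        rw [← Finset.mul_sum, Finset.sum_sub_distrib]
        simp [Finset.sum_ite_eq]
    _ ≤ ∑ e ∈ E, (if e ∈ C then c e else 0) := by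
        apply Finset.sum_le_sum
        intro e he
        have h0 := hf1 e he
        by_cases heC : e ∈ C
        · simp only [heC, if_true]
          split_ifs <;> linarith
        · simp only [heC, if_false]
          by_cases heS : e ∈ S
          · have := hcl e heS heC
            split_ifs with h1 h2 <;> first | (exact absurd (this h1) h2) | linarith
          · simp [hf2 e heS]
    _ = ∑ e ∈ C, c e := by
        rw [← Finset.sum_filter]
        congr 1
        ext e
        simp only [Finset.mem_filter]
        exact ⟨fun h => h.2, fun h => ⟨hCE h, h⟩⟩

theorem aux_div_sum {V : Type*} [DecidableEq V]
    (E : Finset (V × V)) (s t v : V) (Q : Finset (Finset (V × V)))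
    (hQ : ∀ P ∈ Q, IsSTPath E s t P) (x : Finset (V × V) → ℝ) :
    ∑ e ∈ E, (∑ P ∈ Q, if e ∈ P then x P else 0) *
      ((if e.1 = v then (1:ℝ) else 0) - (if e.2 = v then 1 else 0))
    = ∑ P ∈ Q, x P * ((if s = v then (1:ℝ) else 0) - (if t = v then 1 else 0)) := by
  simp_rw [Finset.sum_mul]
  rw [Finset.sum_comm]
  apply Finset.sum_congr rfl
  intro P hP
  have hPE := aux_path_subset (hQ P hP)
  obtain ⟨vs, ⟨hn, h1, h2, _⟩, rfl⟩ := hQ P hP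
  rw [← aux_div_path t v vs s hn h1 h2, Finset.mul_sum]
  rw [← Finset.sum_subset hPE]
  · apply Finset.sum_congr rfl
    intro e he
    simp [he]
  · intro e _ he
    simp [he]

/-- Under acyclicity, bottleneck exclusivity, and non-bottleneck
sufficiency, the characteristic function of the flow game satisfies
`γ(S) = Σ_{P ∈ 𝒫 : P ⊆ S} c(P)` for every coalition `S ⊆ E`. -/
theorem gamma_decomposition_of_conditions
    {V : Type*} [Fintype V] [DecidableEq V]
    (E : Finset (V × V)) (c : V × V → ℝ) (s t : V) (γ : Finset (V × V) → ℝ)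
    (hst : s ≠ t) (hc : ∀ e ∈ E, 0 < c e)
    (hγ : IsFlowGame E c s t γ)
    (hcover : ∀ e ∈ E, ∃ P : Finset (V × V), IsSTPath E s t P ∧ e ∈ P)
    (hacyc : ¬ HasDirectedCycle E)
    (huniq : ∀ b : V × V, IsBottleneck E c s t b →
      ∃! P : Finset (V × V), IsSTPath E s t P ∧ b ∈ P)
    (hsuff : ∀ e ∈ E, ¬ IsBottleneck E c s t e →
      ∑ P ∈ (stPaths E s t).filter (fun P => e ∈ P), pathCap c P ≤ c e) :
    ∀ S : Finset (V × V), S ⊆ E →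
      γ S = ∑ P ∈ (stPaths E s t).filter (fun P => P ⊆ S), pathCap c P := by
  intro S hS
  have hcap0 : ∀ P, IsSTPath E s t P → 0 ≤ pathCap c P := by
    intro P hP
    obtain ⟨e, he, h⟩ := aux_cap_mem c (aux_path_nonempty hst hP)
    rw [← h]
    exact (hc e (aux_path_subset hP he)).le
  set Q := (stPaths E s t).filter (fun P => P ⊆ S) with hQdef
  have hQ : ∀ P, P ∈ Q ↔ IsSTPath E s t P ∧ P ⊆ S := by
    intro P
    rw [hQdef, Finset.mem_filter, aux_mem_stPaths]
  obtain ⟨⟨f, hf, hfv⟩, hub⟩ := hγ S hS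
  apply le_antisymm
  · rw [← hfv]
    have hb : ∀ P : Finset (V × V), ∃ e : V × V, P ∈ Q → e ∈ P ∧ c e = pathCap c P := by
      intro P
      by_cases hP : P ∈ Q
      · obtain ⟨e, he, h⟩ := aux_cap_mem c (aux_path_nonempty hst ((hQ P).1 hP).1)
        exact ⟨e, fun _ => ⟨he, h⟩⟩
      · exact ⟨(s, t), fun h => absurd h hP⟩
    choose b hb using hb
    have hinj : Set.InjOn b (Q : Set (Finset (V × V))) := by
      intro P hP P' hP' h
      have hP := Finset.mem_coe.1 hP
      have hP' := Finset.mem_coe.1 hP'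
      have hp := ((hQ P).1 hP).1
      refine (huniq (b P) ⟨P, hp, (hb P hP).1, (hb P hP).2⟩).unique ⟨hp, (hb P hP).1⟩
        ⟨((hQ P').1 hP').1, ?_⟩
      rw [h]
      exact (hb P' hP').1
    refine (aux_upper E c s t S (Q.image b) hst hS ?_ ?_ f hf).trans ?_
    · intro e he
      obtain ⟨P, hP, rfl⟩ := Finset.mem_image.1 he
      exact aux_path_subset ((hQ P).1 hP).1 (hb P hP).1
    · intro P hP hPS
      have hPQ := (hQ P).2 ⟨hP, hPS⟩
      exact ⟨b P, (hb P hPQ).1, Finset.mem_image_of_mem b hPQ⟩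
    · rw [Finset.sum_image hinj]
      exact (Finset.sum_congr rfl (fun P hP => (hb P hP).2)).le
  · apply hub
    have hQ1 : ∀ P ∈ Q, IsSTPath E s t P := fun P hP => ((hQ P).1 hP).1
    refine ⟨fun e => ∑ P ∈ Q, if e ∈ P then pathCap c P else 0, ⟨?_, ?_, ?_⟩, ?_⟩
    · intro e he
      refine ⟨Finset.sum_nonneg fun P hP => ?_, ?_⟩
      · split_ifs
        · exact hcap0 P (hQ1 P hP)
        · exact le_rfl
      · have hle : (∑ P ∈ Q, if e ∈ P then pathCap c P else 0) ≤
            ∑ P ∈ (stPaths E s t).filter (fun P => e ∈ P), pathCap c P := by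
          rw [← Finset.sum_filter]
          apply Finset.sum_le_sum_of_subset_of_nonneg
          · intro P hP
            rw [Finset.mem_filter] at hP ⊢
            exact ⟨aux_mem_stPaths.2 (hQ1 P hP.1), hP.2⟩
          · intro P hP _
            exact hcap0 P (aux_mem_stPaths.1 (Finset.mem_filter.1 hP).1)
        by_cases hB : IsBottleneck E c s t e
        · obtain ⟨P0, ⟨h0, he0⟩, hu⟩ := huniq e hB
          refine hle.trans ?_
          have : (stPaths E s t).filter (fun P => e ∈ P) = {P0} := by
            ext P
            rw [Finset.mem_filter, aux_mem_stPaths, Finset.mem_singleton]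
            exact ⟨fun h => hu P h, fun h => h ▸ ⟨h0, he0⟩⟩
          rw [this, Finset.sum_singleton]
          exact aux_cap_le c P0 he0
        · exact hle.trans (hsuff e he hB)
    · intro e he
      apply Finset.sum_eq_zero
      intro P hP
      exact if_neg fun h => he (((hQ P).1 hP).2 h)
    · intro v hvs hvt
      have h := aux_div_sum E s t v Q hQ1 (pathCap c)
      rw [← aux_div_eq] at h
      simp only [hvs.symm, hvt.symm, if_false, sub_self, mul_zero, Finset.sum_const_zero] at h
      exact (sub_eq_zero.1 h).symm
    · have h := aux_div_sum E s t s Q hQ1 (pathCap c)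
      rw [← aux_div_eq] at h
      simp only [hst.symm, if_true, if_false, sub_zero, mul_one] at h
      exact h
end
end

section
/- Let D = (V, E; c; s, t) be a flow network whose directed graph (V, E) is acyclic. An arc e = (u, v) ∈ E is a bottleneck arc of some s-t path (i.e., e ∈ B) if and only if, in the restricted subgraph D_e = (V, E_{≥c(e)}) where E_{≥c(e)} = {a ∈ E : c(a) ≥ c(e)}, there exists a directed path from s to u and a directed path from v to t (where a path from a vertex to itself is allowed to be trivial). -/
open scoped Classical
open Finset

noncomputable section

theorem aux_zip_tail_chain {V : Type*} (R : V → V → Prop) (l : List V) :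
    l.IsChain R ↔ ∀ p ∈ l.zip l.tail, R p.1 p.2 := by
  induction l with
  | nil => simp
  | cons a l ih =>
    cases l with
    | nil => simp
    | cons b l =>
      rw [List.isChain_cons_cons, ih]
      simp only [List.tail_cons, List.zip_cons_cons, List.mem_cons, forall_eq_or_imp]

theorem aux_zip_split {V : Type*} (e : V × V) (l : List V) (h : e ∈ l.zip l.tail) :
    ∃ l1 l2, l = l1 ++ e.1 :: e.2 :: l2 := by
  induction l with
  | nil => simp at h
  | cons a l ih =>
    cases l with
    | nil => simp at h
    | cons b l =>
      simp only [List.tail_cons, List.zip_cons_cons, List.mem_cons] at h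
      rcases h with h | h
      · exact ⟨[], l, by simp [h]⟩
      · obtain ⟨l1, l2, h'⟩ := ih h
        exact ⟨a :: l1, l2, by simp [h']⟩

theorem aux_acyclic_nodup {V : Type*} (E : Finset (V × V)) (hac : ¬ HasDirectedCycle E)
    (l : List V) (h : l.IsChain (fun x y => (x, y) ∈ E)) : l.Nodup := by
  induction l with
  | nil => simp
  | cons a l ih =>
    have hl := ih h.tail
    rw [List.nodup_cons]
    refine ⟨fun ha => hac ?_, hl⟩
    obtain ⟨p, q, rfl⟩ := List.append_of_mem ha
    rw [← List.cons_append, List.isChain_append] at h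
    refine ⟨a, p, ?_, h.1, ?_⟩
    · grind
    · apply h.2.2
      · simp [List.getLast?_eq_some_getLast]
      · simp

/-- Bottleneck recognition.  In an acyclic flow network, an arc
`e = (u, v) ∈ E` is a bottleneck arc of some `s`-`t` path iff in the subgraph restricted
to arcs of capacity at least `c(e)` there is a directed path from `s` to `u` and a
directed path from `v` to `t` (trivial paths allowed). -/
theorem bottleneck_recognition
    {V : Type*} [Fintype V] [DecidableEq V]
    (E : Finset (V × V)) (c : V × V → ℝ) (s t : V)
    (hst : s ≠ t) (hc : ∀ e ∈ E, 0 < c e)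
    (hacyc : ¬ HasDirectedCycle E)
    (e : V × V) (he : e ∈ E) :
    IsBottleneck E c s t e ↔
      ((∃ vs : List V, IsPathList (E.filter (fun a => c e ≤ c a)) s e.1 vs) ∧
       (∃ vs : List V, IsPathList (E.filter (fun a => c e ≤ c a)) e.2 t vs)) := by
  constructor
  · rintro ⟨P, ⟨vs, ⟨hnd, hh, hl, hch⟩, rfl⟩, heP, hcap⟩
    have hmin : ∀ a ∈ vs.zip vs.tail, c e ≤ c a := by
      intro a ha
      rw [hcap]
      refine csInf_le (((arcsOf vs).finite_toSet.image c).bddBelow) ⟨a, ?_, rfl⟩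
      simpa [arcsOf] using ha
    have hch' : vs.IsChain (fun x y => (x, y) ∈ E.filter (fun a => c e ≤ c a)) := by
      rw [aux_zip_tail_chain]
      intro p hp
      exact Finset.mem_filter.2 ⟨(aux_zip_tail_chain _ vs).1 hch p hp, hmin p hp⟩
    have heZ : e ∈ vs.zip vs.tail := by simpa [arcsOf] using heP
    obtain ⟨l1, l2, rfl⟩ := aux_zip_split e vs heZ
    have e1 : l1 ++ e.1 :: e.2 :: l2 = (l1 ++ [e.1]) ++ (e.2 :: l2) := by simp
    rw [e1] at hnd hh hl hch'
    have h3 := List.isChain_append.1 hch'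
    have h4 := List.nodup_append.1 hnd
    refine ⟨⟨l1 ++ [e.1], h4.1, ?_, by simp, h3.1⟩, ⟨e.2 :: l2, h4.2.1, by simp, ?_, h3.2.1⟩⟩
    · cases l1 <;> simpa using hh
    · rw [List.getLast?_append] at hl
      simpa [List.getLast?_eq_some_getLast] using hl
  · rintro ⟨⟨l1, -, hh1, hl1, hc1⟩, ⟨l2, -, hh2, hl2, hc2⟩⟩
    have hch : (l1 ++ l2).IsChain (fun x y => (x, y) ∈ E.filter (fun a => c e ≤ c a)) := by
      refine List.isChain_append.2 ⟨hc1, hc2, ?_⟩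
      intro x hx y hy
      rw [hl1] at hx
      rw [hh2] at hy
      cases hx
      cases hy
      simpa using he
    have hchE : (l1 ++ l2).IsChain (fun x y => (x, y) ∈ E) :=
      hch.imp (fun x y h => (Finset.mem_filter.1 h).1)
    have heP : e ∈ arcsOf (l1 ++ l2) := by
      obtain ⟨p, rfl⟩ := List.getLast?_eq_some_iff.1 hl1
      obtain ⟨q, rfl⟩ := List.head?_eq_some_iff.1 hh2
      have : ∀ p : List V, e ∈ (p ++ e.1 :: e.2 :: q).zip (p ++ e.1 :: e.2 :: q).tail := by
        intro p
        induction p with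
        | nil => simp
        | cons a p ih =>
          cases p with
          | nil => simp
          | cons b p =>
            simp only [List.cons_append, List.tail_cons, List.zip_cons_cons, List.mem_cons]
              at ih ⊢
            exact Or.inr ih
      simpa [arcsOf] using this p
    refine ⟨arcsOf (l1 ++ l2), ⟨l1 ++ l2, ⟨aux_acyclic_nodup E hacyc _ hchE, ?_, ?_, hchE⟩, rfl⟩,
      heP, ?_⟩
    · simp [List.head?_append, hh1]
    · simp [List.getLast?_append, hl2]
    · have : IsLeast (c '' (arcsOf (l1 ++ l2) : Set (V × V))) (c e) := by
        refine ⟨⟨e, heP, rfl⟩, ?_⟩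
        rintro _ ⟨a, ha, rfl⟩
        have ha' : a ∈ (l1 ++ l2).zip (l1 ++ l2).tail := by simpa [arcsOf] using ha
        exact (Finset.mem_filter.1 ((aux_zip_tail_chain _ _).1 hch a ha')).2
      exact this.csInf_eq.symm
end
end

section
/- Let D = (V, E; c; s, t) be a flow network in which every arc belongs to at least one s-t path, and suppose that each bottleneck arc b ∈ B belongs to a unique s-t path. For each s-t path P ∈ 𝒫, choose a bottleneck arc b_P ∈ P with c(b_P) = c(P). Then for every coalition S ⊆ E, the set C_S = {b_P : P ∈ 𝒫, P ⊆ S} intersects every s-t path contained in S (i.e., C_S is an s-t cut of the subnetwork induced by S), the chosen arcs b_P for distinct paths P ⊆ S are pairwise distinct, and Σ_{a ∈ C_S} c(a) = Σ_{P ∈ 𝒫 : P ⊆ S} c(P). -/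
open scoped Classical
open Finset

noncomputable section

/-- Suppose every arc lies on some `s`-`t` path and every bottleneck
arc belongs to a unique `s`-`t` path.  Choosing a bottleneck arc `b_P` for each `s`-`t`
path `P`, for every coalition `S ⊆ E` the set `C_S = {b_P : P ⊆ S}` meets every `s`-`t`
path contained in `S`, the chosen arcs of distinct paths contained in `S` are distinct,
and `Σ_{a ∈ C_S} c(a) = Σ_{P ∈ 𝒫 : P ⊆ S} c(P)`. -/
theorem bottleneck_cut
    {V : Type*} [Fintype V] [DecidableEq V]
    (E : Finset (V × V)) (c : V × V → ℝ) (s t : V)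
    (hst : s ≠ t) (hc : ∀ e ∈ E, 0 < c e)
    (hcover : ∀ e ∈ E, ∃ P : Finset (V × V), IsSTPath E s t P ∧ e ∈ P)
    (huniq : ∀ b : V × V, IsBottleneck E c s t b →
      ∃! P : Finset (V × V), IsSTPath E s t P ∧ b ∈ P)
    (bp : Finset (V × V) → V × V)
    (hbp : ∀ P ∈ stPaths E s t, bp P ∈ P ∧ c (bp P) = pathCap c P) :
    ∀ S : Finset (V × V), S ⊆ E →
      (∀ Q ∈ stPaths E s t, Q ⊆ S →
        ∃ P ∈ stPaths E s t, P ⊆ S ∧ bp P ∈ Q) ∧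
      (∀ P ∈ stPaths E s t, ∀ Q ∈ stPaths E s t, P ⊆ S → Q ⊆ S →
        bp P = bp Q → P = Q) ∧
      (∑ a ∈ ((stPaths E s t).filter (fun P => P ⊆ S)).image bp, c a
        = ∑ P ∈ (stPaths E s t).filter (fun P => P ⊆ S), pathCap c P) := by
  have hpath : ∀ P ∈ stPaths E s t, IsSTPath E s t P := fun P hP =>
    (Finset.mem_filter.mp hP).2
  have hinj : ∀ P ∈ stPaths E s t, ∀ Q ∈ stPaths E s t, bp P = bp Q → P = Q := by
    intro P hP Q hQ h
    have h1 := hbp P hP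
    have h2 := hbp Q hQ
    exact (huniq (bp P) ⟨P, hpath P hP, h1.1, h1.2⟩).unique
      ⟨hpath P hP, h1.1⟩ ⟨hpath Q hQ, by rw [h]; exact h2.1⟩
  intro S _
  refine ⟨fun Q hQ hQS => ⟨Q, hQ, hQS, (hbp Q hQ).1⟩,
    fun P hP Q hQ _ _ h => hinj P hP Q hQ h, ?_⟩
  rw [Finset.sum_image]
  · exact Finset.sum_congr rfl fun P hP => (hbp P (Finset.mem_filter.mp hP).1).2
  · intro P hP Q hQ h
    exact hinj P (Finset.mem_filter.mp hP).1 Q (Finset.mem_filter.mp hQ).1 h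
end
end
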